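/- There exists a projective plane of order 16 that contains 21 unitals whose associated 2-(65,5,1) designs are pairwise non-isomorphic. -/

import Mathlib

/-- A finite projective plane: any two distinct points lie on a unique common line,
any two distinct lines meet in a unique common point, and there exist four points
no three of which are collinear. -/
structure ProjPlane where
  Point : Type
  Line : Type
  Incid : Point → Line → Prop
  finite_point : Finite Point
  finite_line : Finite Line
  exists_unique_line : ∀ p q : Point, p ≠ q → ∃! l : Line, Incid p l ∧ Incid q l
  exists_unique_point : ∀ l m : Line, l ≠ m → ∃! p : Point, Incid p l ∧ Incid p m
  nondegenerate : ∃ f : Fin 4 → Point, Function.Injective f ∧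
    ∀ l : Line, ∀ i j k : Fin 4, i ≠ j → i ≠ k → j ≠ k →
      ¬(Incid (f i) l ∧ Incid (f j) l ∧ Incid (f k) l)

/-- The plane has order `n`: every line contains exactly `n + 1` points. -/
def ProjPlane.HasOrder (Pl : ProjPlane) (n : ℕ) : Prop :=
  ∀ l : Pl.Line, {p : Pl.Point | Pl.Incid p l}.ncard = n + 1

/-- A unital in a plane of order `q ^ 2`: a set of `q ^ 3 + 1` points meeting every
line in exactly `1` or exactly `q + 1` points. -/
def ProjPlane.IsUnital (Pl : ProjPlane) (q : ℕ) (U : Set Pl.Point) : Prop :=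
  U.ncard = q ^ 3 + 1 ∧
    ∀ l : Pl.Line,
      (U ∩ {p | Pl.Incid p l}).ncard = 1 ∨ (U ∩ {p | Pl.Incid p l}).ncard = q + 1

/-- The blocks of the design associated to a unital: the intersections of the unital
with its secant lines, viewed as subsets of the unital. -/
def ProjPlane.unitalBlocks (Pl : ProjPlane) (q : ℕ) (U : Set Pl.Point) : Set (Set ↥U) :=
  {b | ∃ l : Pl.Line, (U ∩ {p | Pl.Incid p l}).ncard = q + 1 ∧
        b = {x : ↥U | Pl.Incid x.1 l}}

/-- An isomorphism of designs (given by their block families): a bijection between the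
point sets mapping every block to a block. -/
def DesignIso {α β : Type*} (B₁ : Set (Set α)) (B₂ : Set (Set β)) : Prop :=
  ∃ f : α ≃ β, ∀ b ∈ B₁, ⇑f '' b ∈ B₂

/-!
The plane is the translation plane of a spread set: the slopes of the non-vertical affine lines are
sixteen additive maps of the elementary abelian group of order `16`, and the difference of any two
of them is injective.

The designs are told apart by an isomorphism invariant. Three blocks through a common point `x` have
a number `t` of transversals, that is, of blocks missing `x` that meet all three; the invariant is
the sum of `t ^ 3` over all points `x` and all triples of blocks through `x`. A transversal is
determined by the points in which it meets two of the three blocks, so `t ≤ 16` and nothing is lost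
by reducing `t` modulo `31`. This makes `t` cheap to compute: when a set of blocks is encoded by the
binary digits of a number in every fifth position, intersection is a bitwise operation, and the
cardinality modulo `31` is a remainder.
-/

/-- The points of the projective plane coordinatised by a group `Q`: the affine points `(x, y)`,
and the ideal points of the graphs of slope `m` and of the vertical lines. -/
inductive CartesianPoint (Q : Type)
  | affine (x y : Q)
  | ideal (m : Q)
  | vertical

/-- The lines of the projective plane coordinatised by a group `Q`: the graphs `y = m ∘ x + b`,
the vertical lines `x = a`, and the line formed by the ideal points. -/
inductive CartesianLine (Q : Type)
  | graph (m b : Q)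
  | vertical (a : Q)
  | atInfinity

instance {Q : Type} [Finite Q] : Finite (CartesianPoint Q) := by
  let f : Q × Q ⊕ Option Q → CartesianPoint Q :=
    Sum.elim (fun z => .affine z.1 z.2) fun m => m.elim .vertical .ideal
  refine .of_surjective f ?_
  rintro (⟨x, y⟩ | m | _)
  exacts [⟨.inl (x, y), rfl⟩, ⟨.inr (some m), rfl⟩, ⟨.inr none, rfl⟩]

instance {Q : Type} [Finite Q] : Finite (CartesianLine Q) := by
  let f : Q × Q ⊕ Option Q → CartesianLine Q :=
    Sum.elim (fun z => .graph z.1 z.2) fun a => a.elim .atInfinity .vertical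
  refine .of_surjective f ?_
  rintro (⟨m, b⟩ | a | _)
  exacts [⟨.inl (m, b), rfl⟩, ⟨.inr (some a), rfl⟩, ⟨.inr none, rfl⟩]

/-- `m ∘ x` is the multiplication of a Cartesian group: two graphs of different slopes differ by
an injective function of `x`. Over a finite group this makes two such graphs meet exactly once. -/
def IsCartesianMul {Q : Type} [AddCommGroup Q] (mul : Q → Q → Q) : Prop :=
  ∀ m m' x x', mul m x - mul m' x = mul m x' - mul m' x' → m = m' ∨ x = x'

section CartesianPlane

variable {Q : Type} [AddCommGroup Q] {mul : Q → Q → Q}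

/-- Incidence in the plane coordinatised by `Q` with the multiplication `m ∘ x = mul m x`. -/
def CartesianIncident (mul : Q → Q → Q) : CartesianPoint Q → CartesianLine Q → Prop
  | .affine x y, .graph m b => y = mul m x + b
  | .affine x _, .vertical a => x = a
  | .affine _ _, .atInfinity => False
  | .ideal m, .graph m' _ => m = m'
  | .ideal _, .vertical _ => False
  | .ideal _, .atInfinity => True
  | .vertical, .graph _ _ => False
  | .vertical, .vertical _ => True
  | .vertical, .atInfinity => True

theorem isCartesianMul_of_addMonoidHom (f : Q → Q →+ Q)
    (h : ∀ m m' x, f m x = f m' x → m = m' ∨ x = 0) : IsCartesianMul fun m x => f m x := by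
  intro m m' x x' hx
  rw [sub_eq_sub_iff_sub_eq_sub, ← map_sub, ← map_sub] at hx
  exact (h m m' (x - x') hx).imp_right sub_eq_zero.mp

theorem IsCartesianMul.swap (h : IsCartesianMul mul) : IsCartesianMul fun x m => mul m x := by
  intro x x' m m' hx
  refine (h m m' x x' ?_).symm
  rw [sub_eq_sub_iff_add_eq_add] at hx ⊢
  rw [hx, add_comm]

theorem IsCartesianMul.exists_sub_eq [Finite Q] (h : IsCartesianMul mul) {m m' : Q} (hm : m ≠ m')
    (d : Q) : ∃ x, mul m x - mul m' x = d := by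
  have hinj : Function.Injective fun x => mul m x - mul m' x :=
    fun x x' hx => (h m m' x x' hx).resolve_left hm
  exact Finite.surjective_of_injective hinj d

/-- The points of a line, parametrised by their abscissa (by their ordinate on a vertical line),
with `none` for the point at infinity. -/
def CartesianLine.point (mul : Q → Q → Q) : CartesianLine Q → Option Q → CartesianPoint Q
  | .graph m b, some x => .affine x (mul m x + b)
  | .graph m _, none => .ideal m
  | .vertical a, some y => .affine a y
  | .vertical _, none => .vertical
  | .atInfinity, some m => .ideal m
  | .atInfinity, none => .vertical

/-- The lines through a point, parametrised by their slope (by their intercept at an ideal point),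
with `none` for the vertical line or the line at infinity. -/
def CartesianPoint.line (mul : Q → Q → Q) : CartesianPoint Q → Option Q → CartesianLine Q
  | .affine x y, some m => .graph m (y - mul m x)
  | .affine x _, none => .vertical x
  | .ideal m, some b => .graph m b
  | .ideal _, none => .atInfinity
  | .vertical, some a => .vertical a
  | .vertical, none => .atInfinity

theorem CartesianLine.point_injective (l : CartesianLine Q) :
    Function.Injective (l.point mul) := by
  rintro (_ | s) (_ | t) h <;> cases l <;> simp_all [point]

theorem CartesianLine.range_point (l : CartesianLine Q) :
    Set.range (l.point mul) = {p | CartesianIncident mul p l} := by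
  ext p
  simp only [Set.mem_range, Option.exists, Set.mem_ofPred_eq]
  cases p <;> cases l <;> simp [point, CartesianIncident, eq_comm]

theorem CartesianPoint.exists_line_eq_iff {p : CartesianPoint Q} {l : CartesianLine Q} :
    (∃ t, p.line mul t = l) ↔ CartesianIncident mul p l := by
  simp only [Option.exists]
  cases p <;> cases l <;> simp [line, CartesianIncident, sub_eq_iff_eq_add']

theorem IsCartesianMul.eq_or_eq_of_graph (h : IsCartesianMul mul) {m b m' b' x x' : Q}
    (hx : mul m x + b = mul m' x + b') (hx' : mul m x' + b = mul m' x' + b') :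
    x = x' ∨ m = m' ∧ b = b' := by
  have hsub : mul m x - mul m' x = mul m x' - mul m' x' := by
    rw [add_comm _ b', ← sub_eq_sub_iff_add_eq_add] at hx hx'
    rw [hx, hx']
  obtain rfl | rfl := h m m' x x' hsub
  · exact .inr ⟨rfl, add_left_cancel hx⟩
  · exact .inl rfl

theorem CartesianIncident.eq_or_eq (h : IsCartesianMul mul) {p q : CartesianPoint Q}
    {l l' : CartesianLine Q} (hpl : CartesianIncident mul p l) (hql : CartesianIncident mul q l)
    (hpl' : CartesianIncident mul p l') (hql' : CartesianIncident mul q l') : p = q ∨ l = l' := by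
  rcases p with ⟨x, y⟩ | m | _ <;> rcases q with ⟨x', y'⟩ | m' | _ <;>
    rcases l with ⟨n, b⟩ | a | _ <;> rcases l' with ⟨n', b'⟩ | a' | _
  case affine.affine.graph.graph =>
    obtain rfl | ⟨rfl, rfl⟩ := h.eq_or_eq_of_graph (hpl.symm.trans hpl') (hql.symm.trans hql')
    · exact .inl (by rw [hpl, hql])
    · exact .inr rfl
  all_goals simp_all [CartesianIncident]

theorem exists_cartesianLine [Finite Q] (h : IsCartesianMul mul) :
    ∀ p q, ∃ l, CartesianIncident mul p l ∧ CartesianIncident mul q l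
  | .affine x y, .affine x' y' => by
    obtain rfl | hx := eq_or_ne x x'
    · exact ⟨.vertical x, rfl, rfl⟩
    · obtain ⟨m, hm⟩ := h.swap.exists_sub_eq hx (y - y')
      refine ⟨.graph m (y - mul m x), (add_sub_cancel _ _).symm, ?_⟩
      rw [CartesianIncident, ← sub_sub_cancel y y', ← hm]
      abel
  | .affine x y, .ideal m => ⟨.graph m (y - mul m x), (add_sub_cancel _ _).symm, rfl⟩
  | .ideal m, .affine x y => ⟨.graph m (y - mul m x), rfl, (add_sub_cancel _ _).symm⟩
  | .affine x _, .vertical => ⟨.vertical x, rfl, trivial⟩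
  | .vertical, .affine x _ => ⟨.vertical x, trivial, rfl⟩
  | .ideal _, .ideal _ | .ideal _, .vertical | .vertical, .ideal _ | .vertical, .vertical =>
    ⟨.atInfinity, trivial, trivial⟩

theorem exists_cartesianPoint [Finite Q] (h : IsCartesianMul mul) :
    ∀ l l', ∃ p, CartesianIncident mul p l ∧ CartesianIncident mul p l'
  | .graph m b, .graph m' b' => by
    obtain rfl | hm := eq_or_ne m m'
    · exact ⟨.ideal m, rfl, rfl⟩
    · obtain ⟨x, hx⟩ := h.exists_sub_eq hm (b' - b)
      refine ⟨.affine x (mul m x + b), rfl, ?_⟩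
      rw [CartesianIncident, add_comm _ b']
      exact sub_eq_sub_iff_add_eq_add.mp hx
  | .graph m b, .vertical a | .vertical a, .graph m b => ⟨.affine a (mul m a + b), rfl, rfl⟩
  | .graph m _, .atInfinity | .atInfinity, .graph m _ => ⟨.ideal m, by trivial, by trivial⟩
  | .vertical _, .vertical _ | .vertical _, .atInfinity | .atInfinity, .vertical _
  | .atInfinity, .atInfinity => ⟨.vertical, trivial, trivial⟩

/-- The projective plane coordinatised by a finite Cartesian group. -/
def cartesianPlane [Finite Q] [Nontrivial Q] (h : IsCartesianMul mul) : ProjPlane where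
  Point := CartesianPoint Q
  Line := CartesianLine Q
  Incid := CartesianIncident mul
  finite_point := inferInstance
  finite_line := inferInstance
  exists_unique_line p q hpq := by
    obtain ⟨l, hp, hq⟩ := exists_cartesianLine h p q
    exact ⟨l, ⟨hp, hq⟩, fun l' hl' => (hl'.1.eq_or_eq h hl'.2 hp hq).resolve_left hpq⟩
  exists_unique_point l l' hl := by
    obtain ⟨p, hp, hp'⟩ := exists_cartesianPoint h l l'
    exact ⟨p, ⟨hp, hp'⟩, fun q hq => (hq.1.eq_or_eq h hp hq.2 hp').resolve_right hl⟩
  nondegenerate := by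
    obtain ⟨d, hd⟩ := exists_ne (0 : Q)
    refine ⟨![.vertical, .ideal 0, .affine 0 (mul 0 0), .affine d (mul 0 d + d)], ?_, ?_⟩
    · intro i j
      fin_cases i <;> fin_cases j <;> simp [hd, hd.symm]
    · intro l i j k
      cases l <;> fin_cases i <;> fin_cases j <;> fin_cases k <;>
        simp +contextual [CartesianIncident]
      all_goals grind

theorem cartesianPlane_hasOrder [Finite Q] [Nontrivial Q] (h : IsCartesianMul mul) :
    (cartesianPlane h).HasOrder (Nat.card Q) := by
  intro l
  change {p | CartesianIncident mul p l}.ncard = _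
  rw [← l.range_point, Set.ncard_range_of_injective l.point_injective, Finite.card_option]

end CartesianPlane

section TransversalMoment

variable {P L P' L' : Type*}

/-- The lines missing `x` that meet every line of `S`. -/
def transversals (I : P → L → Prop) (x : P) (S : Finset L) : Set L :=
  {m | ¬ I x m ∧ ∀ b ∈ S, ∃ p, I p b ∧ I p m}

/-- The isomorphism invariant of finite incidence structures used to tell designs apart: the sum of
`w t` over all pairs of a point `x` and `k` lines through `x`, where `t` counts the transversals
of these lines. -/
noncomputable def transversalMoment (w : ℕ → ℕ) (k : ℕ) (I : P → L → Prop) : ℕ :=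
  ∑ᶠ (x : P) (S : Finset L) (_ : S.card = k ∧ ∀ b ∈ S, I x b), w (transversals I x S).ncard

theorem image_transversals {I : P → L → Prop} {I' : P' → L' → Prop} (e : P ≃ P') (φ : L ≃ L')
    (h : ∀ p l, I' (e p) (φ l) ↔ I p l) (x : P) (S : Finset L) :
    φ '' transversals I x S = transversals I' (e x) (φ.finsetCongr S) := by
  ext m
  obtain ⟨m, rfl⟩ := φ.surjective m
  simp [transversals, h, ← e.exists_congr_right, -Finset.mem_map_equiv]

theorem transversalMoment_congr {I : P → L → Prop} {I' : P' → L' → Prop} (e : P ≃ P')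
    (φ : L ≃ L') (h : ∀ p l, I' (e p) (φ l) ↔ I p l) (w : ℕ → ℕ) (k : ℕ) :
    transversalMoment w k I = transversalMoment w k I' := by
  refine finsum_eq_of_bijective e e.bijective fun x => ?_
  refine finsum_eq_of_bijective φ.finsetCongr φ.finsetCongr.bijective fun S => ?_
  rw [← image_transversals e φ h, Set.ncard_image_of_injective _ φ.injective]
  simp only [Equiv.finsetCongr_apply, Finset.card_map, Finset.forall_mem_map,
    Equiv.coe_toEmbedding, h]

end TransversalMoment

section LinearSpace

variable {α β : Type*} {B : Set (Set α)} {B' : Set (Set β)}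

/-- A family of blocks forms a linear space: each block has at least two points, and any two
distinct points lie on exactly one block. -/
def IsLinearSpace (B : Set (Set α)) : Prop :=
  (∀ b ∈ B, b.Nontrivial) ∧ ∀ x y, x ≠ y → ∃! b, b ∈ B ∧ x ∈ b ∧ y ∈ b

theorem IsLinearSpace.image_mem_iff (hB : IsLinearSpace B) (hB' : IsLinearSpace B') {f : α ≃ β}
    (hf : ∀ b ∈ B, f '' b ∈ B') (b : Set α) : f '' b ∈ B' ↔ b ∈ B := by
  refine ⟨fun hb => ?_, hf b⟩
  obtain ⟨x, hx, y, hy, hxy⟩ := Set.image_nontrivial f.injective |>.mp (hB'.1 _ hb)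
  obtain ⟨c, ⟨hc, hxc, hyc⟩, -⟩ := hB.2 x y hxy
  have himage : f '' b = f '' c := (hB'.2 (f x) (f y) (f.injective.ne hxy)).unique
    ⟨hb, Set.mem_image_of_mem f hx, Set.mem_image_of_mem f hy⟩
    ⟨hf c hc, Set.mem_image_of_mem f hxc, Set.mem_image_of_mem f hyc⟩
  rwa [f.injective.image_injective himage]

theorem DesignIso.transversalMoment_eq (h : DesignIso B B') (hB : IsLinearSpace B)
    (hB' : IsLinearSpace B') (w : ℕ → ℕ) (k : ℕ) :
    transversalMoment w k (fun x (b : B) => x ∈ b.1) =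
      transversalMoment w k (fun x (b : B') => x ∈ b.1) := by
  obtain ⟨f, hf⟩ := h
  let φ : B ≃ B' := (Equiv.Set.congr f).subtypeEquiv fun b => (hB.image_mem_iff hB' hf b).symm
  exact transversalMoment_congr f φ (fun x b => f.injective.mem_set_image) w k

end LinearSpace

section Unital

variable {Pl : ProjPlane} {q : ℕ} {U : Set Pl.Point}

/-- The lines meeting `U` in `q + 1` points. -/
abbrev ProjPlane.Secant (Pl : ProjPlane) (q : ℕ) (U : Set Pl.Point) : Type :=
  {l : Pl.Line // (U ∩ {p | Pl.Incid p l}).ncard = q + 1}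

theorem ProjPlane.Secant.nontrivial (hq : q ≠ 0) (l : Pl.Secant q U) :
    {x : U | Pl.Incid x l.1}.Nontrivial := by
  obtain ⟨x, hx, y, hy, hxy⟩ :=
    Set.one_lt_ncard_iff_nontrivial_and_finite.mp (by rw [l.2]; lia : 1 < Set.ncard _) |>.1
  exact ⟨⟨x, hx.1⟩, hx.2, ⟨y, hy.1⟩, hy.2, by simpa using hxy⟩

theorem ProjPlane.IsUnital.ncard_eq_of_nontrivial (hU : Pl.IsUnital q U) {l : Pl.Line}
    (hl : {x : U | Pl.Incid x l}.Nontrivial) : (U ∩ {p | Pl.Incid p l}).ncard = q + 1 := by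
  refine (hU.2 l).resolve_left fun hcard => ?_
  obtain ⟨x, hx, y, hy, hxy⟩ := hl
  obtain ⟨z, hz⟩ := Set.ncard_eq_one.mp hcard
  have hmem (v : U) (hv : Pl.Incid v l) : v.1 = z := hz.subset ⟨v.2, hv⟩
  exact hxy <| Subtype.ext <| (hmem x hx).trans (hmem y hy).symm

theorem ProjPlane.IsUnital.isLinearSpace (hU : Pl.IsUnital q U) (hq : q ≠ 0) :
    IsLinearSpace (Pl.unitalBlocks q U) := by
  refine ⟨?_, fun x y hxy => ?_⟩
  · rintro _ ⟨l, hl, rfl⟩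
    exact Secant.nontrivial hq ⟨l, hl⟩
  · obtain ⟨l, ⟨hx, hy⟩, hunique⟩ := Pl.exists_unique_line x y (Subtype.coe_injective.ne hxy)
    refine ⟨{z | Pl.Incid z l},
      ⟨⟨l, hU.ncard_eq_of_nontrivial ⟨x, hx, y, hy, hxy⟩, rfl⟩, hx, hy⟩, ?_⟩
    rintro _ ⟨⟨l', -, rfl⟩, hx', hy'⟩
    rw [hunique l' ⟨hx', hy'⟩]

/-- The block cut out by a secant line. -/
def ProjPlane.Secant.block (l : Pl.Secant q U) : Pl.unitalBlocks q U :=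
  ⟨{x | Pl.Incid x l.1}, l.1, l.2, rfl⟩

theorem ProjPlane.Secant.block_bijective (hq : q ≠ 0) :
    Function.Bijective (block : Pl.Secant q U → Pl.unitalBlocks q U) := by
  refine ⟨fun l m hlm => ?_, fun ⟨_, l, hl, hb⟩ => ⟨⟨l, hl⟩, Subtype.ext hb.symm⟩⟩
  have hmem (x : U) : Pl.Incid x l.1 ↔ Pl.Incid x m.1 := Set.ext_iff.mp (congrArg (·.1) hlm) x
  obtain ⟨x, hx, y, hy, hxy⟩ := l.nontrivial hq
  exact Subtype.ext <| (Pl.exists_unique_line x y (Subtype.coe_injective.ne hxy)).unique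
    ⟨hx, hy⟩ ⟨(hmem x).mp hx, (hmem y).mp hy⟩

/-- The invariant of the design of a unital, read off from the secant lines of the plane. -/
noncomputable def ProjPlane.unitalMoment (Pl : ProjPlane) (q : ℕ) (w : ℕ → ℕ) (k : ℕ)
    (U : Set Pl.Point) : ℕ :=
  transversalMoment w k fun (x : U) (l : Pl.Secant q U) => Pl.Incid x l.1

theorem ProjPlane.unitalMoment_eq (hq : q ≠ 0) (w : ℕ → ℕ) (k : ℕ) :
    Pl.unitalMoment q w k U = transversalMoment w k fun x (b : Pl.unitalBlocks q U) => x ∈ b.1 :=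
  transversalMoment_congr (I := fun (x : U) (l : Pl.Secant q U) => Pl.Incid x l.1) (.refl U)
    (.ofBijective _ (Secant.block_bijective hq)) (fun _ _ => .rfl) w k

theorem DesignIso.unitalMoment_eq {Pl' : ProjPlane} {V : Set Pl'.Point}
    (h : DesignIso (Pl.unitalBlocks q U) (Pl'.unitalBlocks q V)) (hq : q ≠ 0)
    (hU : Pl.IsUnital q U) (hV : Pl'.IsUnital q V) (w : ℕ → ℕ) (k : ℕ) :
    Pl.unitalMoment q w k U = Pl'.unitalMoment q w k V := by
  rw [Pl.unitalMoment_eq hq, Pl'.unitalMoment_eq hq,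
    h.transversalMoment_eq (hU.isLinearSpace hq) (hV.isLinearSpace hq)]

end Unital

section Bitset

/-- The set of the numbers in a list, encoded by the bits `5 * i`. The spacing allows the elements
to be counted by a division with remainder, as `2 ^ 5` is congruent to `1` modulo `31`. -/
def bitset (L : List ℕ) : ℕ :=
  L.foldr (fun i n => 2 ^ (5 * i) ||| n) 0

/-- Whether a number belongs to the set encoded by `n`, that is, bit `5 * i` of `n`. The operations
are those that the kernel evaluates directly on literals. -/
def memBitset (n i : ℕ) : Bool :=
  Nat.beq (Nat.mod (Nat.shiftRight n (Nat.mul 5 i)) 2) 1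

theorem memBitset_eq_testBit (n i : ℕ) : memBitset n i = n.testBit (5 * i) := by
  rw [Nat.testBit_eq_decide_div_mod_eq, ← Nat.shiftRight_eq_div_pow]
  exact Bool.eq_iff_iff.mpr <| Nat.beq_eq.to_iff.trans decide_eq_true_iff.symm

theorem testBit_bitset {L : List ℕ} {j : ℕ} : (bitset L).testBit j ↔ ∃ i ∈ L, 5 * i = j := by
  induction L with
  | nil => simp [bitset]
  | cons i L ih =>
    rw [bitset, List.foldr_cons, ← bitset, Nat.testBit_or, Nat.testBit_two_pow]
    simp [ih]

theorem memBitset_bitset {L : List ℕ} {i : ℕ} : memBitset (bitset L) i ↔ i ∈ L := by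
  simp [memBitset_eq_testBit, testBit_bitset]

theorem bitset_land (L : List ℕ) (n : ℕ) :
    bitset L &&& n = bitset (L.filter (memBitset n)) := by
  refine Nat.eq_of_testBit_eq fun j => Bool.eq_iff_iff.mpr ?_
  simp only [Nat.testBit_and, Bool.and_eq_true, testBit_bitset, List.mem_filter,
    memBitset_eq_testBit]
  grind

theorem bitset_lor_xor (L : List ℕ) (n : ℕ) :
    (bitset L ||| n) ^^^ n = bitset (L.filter fun i => !memBitset n i) := by
  refine Nat.eq_of_testBit_eq fun j => Bool.eq_iff_iff.mpr ?_
  trans (bitset L).testBit j ∧ n.testBit j = false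
  · cases h : (bitset L).testBit j <;> cases h' : n.testBit j <;> simp [h, h']
  · simp only [testBit_bitset, List.mem_filter, memBitset_eq_testBit]
    grind

theorem bitset_mod {L : List ℕ} (hL : L.Nodup) : bitset L % 31 = L.length % 31 := by
  have hbits : (bitset L).bitIndices.toFinset = L.toFinset.image (5 * ·) := by
    ext j
    simp [Nat.mem_bitIndices, testBit_bitset]
  calc bitset L % 31
      = (∑ j ∈ (bitset L).bitIndices.toFinset, 2 ^ j) % 31 := by
        rw [Finset.sum_toFinset_bitIndices_two_pow]
    _ = (∑ i ∈ L.toFinset, 2 ^ (5 * i)) % 31 := by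
        rw [hbits, Finset.sum_image fun i _ j _ hij => Nat.mul_left_cancel (by decide) hij]
    _ = (∑ i ∈ L.toFinset, 1) % 31 := by
        have hpow (i : ℕ) : 2 ^ (5 * i) ≡ 1 [MOD 31] := by
          simpa only [pow_mul, one_pow] using Nat.ModEq.pow i (show 2 ^ 5 ≡ 1 [MOD 31] by decide)
        exact Nat.ModEq.sum fun i _ => hpow i
    _ = L.length % 31 := by
        rw [Finset.sum_const, List.toFinset_card_of_nodup hL, smul_eq_mul, mul_one]

theorem sum_powersetCard_insert {ι M : Type*} [DecidableEq ι] [AddCommMonoid M] {T : Finset ι}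
    {b : ι} (hb : b ∉ T) (f : Finset ι → M) (k : ℕ) :
    ∑ S ∈ (insert b T).powersetCard (k + 1), f S =
      ∑ S ∈ T.powersetCard (k + 1), f S + ∑ S ∈ T.powersetCard k, f (insert b S) := by
  have hnotMem {n : ℕ} {S : Finset ι} (hS : S ∈ T.powersetCard n) : b ∉ S :=
    fun hmem => hb <| (Finset.mem_powersetCard.mp hS).1 hmem
  have hdisj : Disjoint (T.powersetCard (k + 1)) ((T.powersetCard k).image (insert b)) := by
    rw [Finset.disjoint_right, Finset.forall_mem_image]
    exact fun S _ hS => hnotMem hS (Finset.mem_insert_self b S)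
  rw [Finset.powersetCard_succ_insert hb, Finset.sum_union hdisj, Finset.sum_image]
  intro S hS S' hS' h
  rw [← Finset.erase_insert (hnotMem hS), ← Finset.erase_insert (hnotMem hS'), h]

/-- The sum of `w t` over all `k` masks chosen from the list, where `t` is the number of elements
of the bitset `n` that lie in each of these masks. -/
def sumMasked (w : ℕ → ℕ) : ℕ → ℕ → List ℕ → ℕ
  | 0, n, _ => w (n % 31)
  | _ + 1, _, [] => 0
  | k + 1, n, N :: L => sumMasked w k (n &&& N) L + sumMasked w (k + 1) n L

theorem sumMasked_bitset {ι : Type*} [DecidableEq ι] (w : ℕ → ℕ) (mask : ι → ℕ) {T : List ι}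
    (hT : T.Nodup) {A : List ℕ} (hA : A.Nodup) (k : ℕ) :
    sumMasked w k (bitset A) (T.map mask) = ∑ S ∈ T.toFinset.powersetCard k,
      w ((A.filter fun i => ∀ b ∈ S, memBitset (mask b) i).length % 31) := by
  induction T generalizing A k with
  | nil =>
    cases k with
    | zero => simp [sumMasked, bitset_mod hA]
    | succ k =>
      rw [List.toFinset_nil, Finset.powersetCard_eq_empty.mpr (by simp)]
      rfl
  | cons b T ih =>
    obtain ⟨hb, hT⟩ := List.nodup_cons.mp hT
    cases k with
    | zero => simp [sumMasked, bitset_mod hA]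
    | succ k =>
      rw [List.map_cons, sumMasked, bitset_land, ih hT (hA.filter _), ih hT hA, List.toFinset_cons,
        sum_powersetCard_insert (by simpa using hb), add_comm]
      simp [List.filter_filter, Bool.and_comm]

end Bitset

section BitMatrix

/-- The bitwise union of the rows of a bit matrix containing column `i`. -/
def neighbours (rows : List ℕ) (i : ℕ) : ℕ :=
  (rows.filter fun r => memBitset r i).foldr (· ||| ·) 0

theorem memBitset_neighbours {rows : List ℕ} {i j : ℕ} :
    memBitset (neighbours rows i) j ↔ ∃ r ∈ rows, memBitset r i ∧ memBitset r j := by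
  simp only [memBitset_eq_testBit]
  induction rows with
  | nil => simp [neighbours]
  | cons r rows ih =>
    rw [neighbours] at ih
    by_cases hr : memBitset r i <;> simp_all [neighbours, memBitset_eq_testBit]

/-- `transversalMoment` of the incidence structure given by a bit matrix. -/
def bitMoment (w : ℕ → ℕ) (k : ℕ) (rows cols : List ℕ) : ℕ :=
  (rows.map fun r => sumMasked w k ((bitset cols ||| r) ^^^ r)
    ((cols.filter (memBitset r)).map (neighbours rows))).sum

variable {P L : Type*} {I : P → L → Prop} {ps : List P} {ls : List L} {row : P → ℕ} {code : L → ℕ}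

theorem ncard_transversals (hps : ∀ p, p ∈ ps) (hls : ∀ l, l ∈ ls) (hls' : ls.Nodup)
    (hrow : ∀ p l, memBitset (row p) (code l) ↔ I p l) (x : P) (S : Finset L) :
    (transversals I x S).ncard = (((ls.map code).filter fun i => !memBitset (row x) i).filter
      fun i => ∀ b ∈ S, memBitset (neighbours (ps.map row) (code b)) i).length := by
  classical
  rw [List.filter_map, List.filter_map, List.length_map,
    ← List.toFinset_card_of_nodup ((hls'.filter _).filter _), ← Set.ncard_coe_finset]
  congr 1
  ext m
  have hx : memBitset (row x) (code m) = false ↔ ¬ I x m := by rw [← hrow, Bool.not_eq_true]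
  simp [transversals, hls, hps, hrow, hx, memBitset_neighbours, and_comm]

theorem transversalMoment_eq_bitMoment (hps : ∀ p, p ∈ ps) (hps' : ps.Nodup) (hls : ∀ l, l ∈ ls)
    (hcode : (ls.map code).Nodup) (hrow : ∀ p l, memBitset (row p) (code l) ↔ I p l) (w : ℕ → ℕ)
    (k : ℕ) : transversalMoment (fun t => w (t % 31)) k I =
      bitMoment w k (ps.map row) (ls.map code) := by
  classical
  have hls' : ls.Nodup := hcode.of_map
  have hpoint (x : P) : (∑ᶠ (S : Finset L) (_ : S.card = k ∧ ∀ b ∈ S, I x b),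
      w ((transversals I x S).ncard % 31)) =
      sumMasked w k ((bitset (ls.map code) ||| row x) ^^^ row x)
        (((ls.map code).filter (memBitset (row x))).map (neighbours (ps.map row))) := by
    have hmem (S : Finset L) : (S.card = k ∧ ∀ b ∈ S, I x b) ↔
        S ∈ (ls.filter fun l => memBitset (row x) (code l)).toFinset.powersetCard k := by
      simp [Finset.mem_powersetCard, Finset.subset_iff, hls, hrow, and_comm]
    rw [bitset_lor_xor, List.filter_map (p := memBitset (row x)), List.map_map,
      sumMasked_bitset _ _ (hls'.filter _) (hcode.filter _)]
    simp only [hmem, finsum_mem_finset_eq_sum, ncard_transversals hps hls hls' hrow]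
    rfl
  rw [transversalMoment, finsum_congr hpoint,
    finsum_eq_finsetSum_of_support_subset (s := ps.toFinset) _ (by simp [hps]),
    List.sum_toFinset _ hps', bitMoment, List.map_map]
  rfl

end BitMatrix

section BitMatrixOfPlane

variable {Pl : ProjPlane} {row : Pl.Point → ℕ} {code : Pl.Line → ℕ} {ps : List Pl.Point} {q : ℕ}

/-- The columns of a bit matrix with `N` columns which contain `q + 1` ones. -/
def secantColumns (q N : ℕ) (rows : List ℕ) : List ℕ :=
  (List.range N).filter fun i => rows.countP (memBitset · i) = q + 1

theorem ncard_inter_line (hps : ps.Nodup)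
    (hrow : ∀ p l, memBitset (row p) (code l) ↔ Pl.Incid p l) (l : Pl.Line) :
    ({p | p ∈ ps} ∩ {p | Pl.Incid p l}).ncard =
      (ps.map row).countP (memBitset · (code l)) := by
  classical
  rw [List.countP_map, List.countP_eq_length_filter, ← List.toFinset_card_of_nodup (hps.filter _),
    ← Set.ncard_coe_finset]
  congr 1
  ext p
  simp [hrow]

theorem isUnital_of_countP (hps : ps.Nodup)
    (hrow : ∀ p l, memBitset (row p) (code l) ↔ Pl.Incid p l) (hlength : ps.length = q ^ 3 + 1)
    (hcount : ∀ l, (ps.map row).countP (memBitset · (code l)) = 1 ∨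
      (ps.map row).countP (memBitset · (code l)) = q + 1) : Pl.IsUnital q {p | p ∈ ps} := by
  classical
  refine ⟨?_, fun l => ?_⟩
  · rw [← hlength, ← List.toFinset_card_of_nodup hps, ← Set.ncard_coe_finset, List.coe_toFinset]
  · rw [ncard_inter_line hps hrow]
    exact hcount l

theorem unitalMoment_eq_bitMoment (hps : ps.Nodup)
    (hrow : ∀ p l, memBitset (row p) (code l) ↔ Pl.Incid p l) (hcode : Function.Injective code)
    {N : ℕ} (hN : Set.range code = Set.Iio N) (w : ℕ → ℕ) (k : ℕ) :
    Pl.unitalMoment q (fun t => w (t % 31)) k {p | p ∈ ps} =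
      bitMoment w k (ps.map row) (secantColumns q N (ps.map row)) := by
  let secantCode (l : Pl.Secant q {p | p ∈ ps}) : ℕ := code l.1
  have hsecant : Function.Injective secantCode := hcode.comp Subtype.val_injective
  have hmem (i : ℕ) : i ∈ secantColumns q N (ps.map row) ↔ i ∈ Set.range secantCode := by
    have hi : i < N ↔ i ∈ Set.range code := by rw [hN, Set.mem_Iio]
    simp only [secantColumns, List.mem_filter, List.mem_range, hi, decide_eq_true_eq]
    constructor
    · rintro ⟨⟨l, rfl⟩, hl⟩
      exact ⟨⟨l, (ncard_inter_line hps hrow l).trans hl⟩, rfl⟩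
    · rintro ⟨l, rfl⟩
      exact ⟨⟨l.1, rfl⟩, (ncard_inter_line hps hrow l.1).symm.trans l.2⟩
  obtain ⟨ls, hls⟩ : secantColumns q N (ps.map row) ∈ Set.range (List.map secantCode) := by
    rw [Set.range_list_map]
    exact fun i hi => (hmem i).mp hi
  have hnodup : (ls.map secantCode).Nodup := hls ▸ List.nodup_range.filter _
  have hcomplete (l : Pl.Secant q {p | p ∈ ps}) : l ∈ ls := by
    rw [← List.mem_map_of_injective hsecant, hls, hmem]
    exact ⟨l, rfl⟩
  rw [← hls, ← List.attach_map_val (l := ps)]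
  exact transversalMoment_eq_bitMoment (row := fun p : {p | p ∈ ps} => row p.1) ps.mem_attach
    (List.nodup_attach.mpr hps) hcomplete hnodup (fun p l => hrow p.1 l.1) w k

end BitMatrixOfPlane

/-- The elementary abelian group of order `16`, encoded by bit vectors with bitwise addition. -/
def Nibble : Type :=
  BitVec 4

namespace Nibble

instance : Add Nibble :=
  ⟨fun x y => BitVec.xor x y⟩

instance : Zero Nibble :=
  ⟨BitVec.ofNat 4 0⟩

instance : Neg Nibble :=
  ⟨id⟩

instance : AddCommGroup Nibble where
  toAddGroup := .ofLeftAxioms BitVec.xor_assoc (fun _ => BitVec.zero_xor) fun _ => BitVec.xor_self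
  add_comm := BitVec.xor_comm

instance : DecidableEq Nibble :=
  inferInstanceAs (DecidableEq (BitVec 4))

instance : Fintype Nibble :=
  inferInstanceAs (Fintype (BitVec 4))

theorem card : Nat.card Nibble = 16 := by
  rw [Nat.card_eq_fintype_card]
  rfl

/-- The number whose binary expansion is a bit vector. -/
def toNat (x : Nibble) : ℕ :=
  BitVec.toNat x

/-- The bit vector of a number modulo `16`. -/
def ofNat (n : ℕ) : Nibble :=
  BitVec.ofNat 4 n

instance : Nontrivial Nibble :=
  ⟨0, ofNat 1, by decide⟩

theorem toNat_lt (x : Nibble) : x.toNat < 16 :=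
  BitVec.isLt x

theorem toNat_injective : Function.Injective toNat :=
  fun _ _ => BitVec.eq_of_toNat_eq

theorem toNat_ofNat {n : ℕ} (hn : n < 16) : (ofNat n).toNat = n :=
  BitVec.toNat_ofNat n 4 |>.trans (Nat.mod_eq_of_lt hn)

theorem ofNat_toNat (x : Nibble) : ofNat x.toNat = x :=
  toNat_injective (toNat_ofNat x.toNat_lt)

/-- The bit vectors in the order of their numbers. -/
def all : List Nibble :=
  (List.range 16).map ofNat

theorem mem_all (x : Nibble) : x ∈ all :=
  List.mem_map.mpr ⟨x.toNat, List.mem_range.mpr x.toNat_lt, x.ofNat_toNat⟩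

theorem nodup_all : all.Nodup := by
  decide

/-- The contribution of bit `i` of `x` to the image of `x` under the `m`-th of a family of linear
maps, which send the `i`-th vector of the standard basis to the entries of `images`. -/
def bitImage (images : List ℕ) (m i : ℕ) (x : Nibble) : Nibble :=
  if BitVec.getLsbD x i then ofNat (images.getD m 0) else 0

theorem bitImage_add (images : List ℕ) (m i : ℕ) (x y : Nibble) :
    bitImage images m i (x + y) = bitImage images m i x + bitImage images m i y := by
  have hxy : BitVec.getLsbD (x + y) i = (BitVec.getLsbD x i ^^ BitVec.getLsbD y i) :=
    BitVec.getLsbD_xor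
  have hself (z : Nibble) : z + z = 0 := neg_add_cancel z
  cases hx : BitVec.getLsbD x i <;> cases hy : BitVec.getLsbD y i <;> simp [bitImage, *]

end Nibble

/-- The matrices over the field of two elements in a spread set of order `16`: each of the four
lists gives the images of one vector of the standard basis under the sixteen matrices. -/
def spreadMap (m : Nibble) : Nibble →+ Nibble :=
  .mk' (fun x =>
    .bitImage [0, 1, 2, 3, 4, 5, 6, 7, 8, 9, 10, 11, 12, 13, 14, 15] m.toNat 0 x +
    .bitImage [0, 2, 13, 14, 6, 1, 8, 12, 9, 15, 3, 7, 11, 5, 4, 10] m.toNat 1 x +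
    .bitImage [0, 4, 3, 7, 12, 9, 11, 13, 14, 2, 8, 5, 15, 10, 1, 6] m.toNat 2 x +
    .bitImage [0, 8, 10, 1, 15, 3, 12, 2, 5, 7, 6, 4, 13, 14, 9, 11] m.toNat 3 x) fun x y => by
    simp only [Nibble.bitImage_add]
    abel

theorem isCartesianMul_spreadMap : IsCartesianMul fun m x => spreadMap m x :=
  isCartesianMul_of_addMonoidHom spreadMap (by decide +kernel)

/-- The translation plane of order `16` containing the unitals. -/
def spreadPlane : ProjPlane :=
  cartesianPlane isCartesianMul_spreadMap

theorem spreadPlane_hasOrder : spreadPlane.HasOrder 16 :=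
  Nibble.card ▸ cartesianPlane_hasOrder isCartesianMul_spreadMap

/-- The column of a line in the bit matrix of the plane. -/
def lineCode : CartesianLine Nibble → ℕ
  | .graph m b => 16 * m.toNat + b.toNat
  | .vertical a => 256 + a.toNat
  | .atInfinity => 272

theorem lineCode_injective : Function.Injective lineCode := by
  rintro (⟨m, b⟩ | a | _) (⟨m', b'⟩ | a' | _) h <;> simp only [lineCode] at h
  case graph.graph =>
    have := b.toNat_lt
    have := b'.toNat_lt
    rw [Nibble.toNat_injective (by lia : m.toNat = m'.toNat),
      Nibble.toNat_injective (by lia : b.toNat = b'.toNat)]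
  case vertical.vertical => rw [Nibble.toNat_injective (by lia : a.toNat = a'.toNat)]
  all_goals grind [Nibble.toNat_lt]

theorem range_lineCode : Set.range lineCode = Set.Iio 273 := by
  ext i
  refine ⟨?_, fun hi => ?_⟩
  · rintro ⟨⟨m, b⟩ | a | _, rfl⟩ <;> simp only [lineCode, Set.mem_Iio] <;> grind [Nibble.toNat_lt]
  obtain hi | hi | rfl : i < 256 ∨ 256 ≤ i ∧ i < 272 ∨ i = 272 := by
    rw [Set.mem_Iio] at hi
    lia
  · refine ⟨.graph (.ofNat (i / 16)) (.ofNat (i % 16)), ?_⟩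
    rw [lineCode, Nibble.toNat_ofNat (by lia), Nibble.toNat_ofNat (by lia), Nat.div_add_mod]
  · refine ⟨.vertical (.ofNat (i - 256)), ?_⟩
    rw [lineCode, Nibble.toNat_ofNat (by lia), Nat.add_sub_cancel' hi.1]
  · exact ⟨.atInfinity, rfl⟩

/-- The row of a point in the bit matrix of the plane. -/
def pointRow (p : CartesianPoint Nibble) : ℕ :=
  bitset <| (none :: Nibble.all.map some).map fun t => lineCode (p.line (spreadMap · ·) t)

theorem memBitset_pointRow (p : CartesianPoint Nibble) (l : CartesianLine Nibble) :
    memBitset (pointRow p) (lineCode l) ↔ CartesianIncident (spreadMap · ·) p l := by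
  have hall (t : Option Nibble) : t ∈ none :: Nibble.all.map some := by
    cases t <;> simp [Nibble.mem_all]
  rw [pointRow, memBitset_bitset, List.mem_map]
  simp only [hall, true_and, lineCode_injective.eq_iff]
  exact CartesianPoint.exists_line_eq_iff

/-- The ideal point of slope `11` and the affine points given by the bits of a mask. -/
def unitalPoints (mask : ℕ) : List (CartesianPoint Nibble) :=
  .ideal (.ofNat 11) :: ((Nibble.all ×ˢ Nibble.all).filter fun z =>
    mask.testBit (16 * z.1.toNat + z.2.toNat)).map fun z => .affine z.1 z.2

theorem nodup_unitalPoints (mask : ℕ) : (unitalPoints mask).Nodup := by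
  refine List.nodup_cons.mpr ⟨by simp, List.Nodup.map ?_ ?_⟩
  · rintro ⟨x, y⟩ ⟨x', y'⟩ h
    simpa using h
  · exact (Nibble.nodup_all.product Nibble.nodup_all).filter _

/-- The affine parts of the unitals: bit `16 * x + y` stands for the point `(x, y)`. -/
def unitalMask : Fin 21 → ℕ :=
  ![14474012897162956314956869902005895047508884561221522227419601119930986029138,
    14474012890395465424437402731002468068874466639203181467550121750566266389768,
    7947498957119919007470433992479521121677132038714045126187226928202216636764,
    7834310313545829573515489658859681872263735285108596778620943686314832199889,
    68783653061256572843404033930247171541502981556903282407687926466910898619704,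
    3549735324255909060011064228054116488007299098944658721354807550521968408,
    79724567302683282490568034602304326048277957930094499586492887598521473185860,
    80061202098523898709023576429371030594903901403865725282359568338661967414152,
    72882913127369805231591745089787831025076609604205841943140012862114015415442,
    80172679105465407218314284648156637324443030597467524597349422744672416699792,
    15487761448357194464428031354730816943655439736745564016278040174968088600,
    746203230210090068370604286756860947400457907211720577512933873590474899472,
    14474139753797099906284394171086064497754840420939947092337979674219545969264,
    79848084183997655158281715612027768034576081911226958807512579076780375753735,
    14474012886977731166176571371980799893651665749605238774329003607113637244418,
    453641928683953975362825457911678829682714567106512825946617261598225631320,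
    11093646491554110341748487722227116724716316570410155599605934531419679229981,
    58146940356182693913991861307336327785321084476459355390009266580107015225360,
    29050120707440412485798567773169149103395136282675608395121076283877987766352,
    716022623619905614926210886537660574389243624074902771076616253339450517024,
    1304004134998135712172709587260065827155388791847176595366319816341856165985]

/-- The values of the invariant which distinguish the unitals. -/
def cubicMoment : Fin 21 → ℕ :=
  ![2359680, 2107776, 2112000, 2136768, 2161152, 2083584, 2116896, 2234496, 2117376, 2126208,
    2094336, 2383104, 2139648, 2126592, 2108448, 2109696, 2181120, 2163072, 2121120, 2093760,
    2190144]

theorem cubicMoment_injective : Function.Injective cubicMoment := by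
  decide +kernel

/-- The rows of the bit matrix of a unital. -/
def unitalRows (i : Fin 21) : List ℕ :=
  (unitalPoints (unitalMask i)).map pointRow

/-- The point set of a unital. -/
def unital (i : Fin 21) : Set spreadPlane.Point :=
  {p | p ∈ unitalPoints (unitalMask i)}

set_option maxRecDepth 100000 in
set_option maxHeartbeats 40000000 in
-- For each unital the kernel intersects 65 * 560 triples of bitsets.
theorem unitalRows_spec (i : Fin 21) :
    ((unitalRows i).length = 65 ∧
      ∀ j < 273, (unitalRows i).countP (memBitset · j) = 1 ∨
        (unitalRows i).countP (memBitset · j) = 5) ∧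
      bitMoment (· ^ 3) 3 (unitalRows i) (secantColumns 4 273 (unitalRows i)) = cubicMoment i := by
  fin_cases i <;> decide +kernel

theorem isUnital_unital (i : Fin 21) : spreadPlane.IsUnital 4 (unital i) := by
  obtain ⟨⟨hlength, hcount⟩, -⟩ := unitalRows_spec i
  refine isUnital_of_countP (nodup_unitalPoints _) memBitset_pointRow ?_ fun l => hcount _ ?_
  · exact List.length_map pointRow |>.symm.trans hlength
  · exact range_lineCode.subset ⟨l, rfl⟩

theorem unitalMoment_unital (i : Fin 21) :
    spreadPlane.unitalMoment 4 (fun t => (t % 31) ^ 3) 3 (unital i) = cubicMoment i :=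
  (unitalMoment_eq_bitMoment (nodup_unitalPoints _) memBitset_pointRow lineCode_injective
    range_lineCode (· ^ 3) 3).trans (unitalRows_spec i).2

/-- There is a projective plane of order 16 containing 21 unitals whose associated
`2-(65,5,1)` designs are pairwise non-isomorphic. -/
theorem exists_plane_with_21_nonisomorphic_unital_designs :
    ∃ (Pl : ProjPlane) (U : Fin 21 → Set Pl.Point),
      Pl.HasOrder 16 ∧
      (∀ i, Pl.IsUnital 4 (U i)) ∧
      (∀ i j, i ≠ j →
        ¬ DesignIso (Pl.unitalBlocks 4 (U i)) (Pl.unitalBlocks 4 (U j))) := by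
  refine ⟨spreadPlane, unital, spreadPlane_hasOrder, isUnital_unital, fun i j hij h => hij ?_⟩
  refine cubicMoment_injective ?_
  calc cubicMoment i
      = spreadPlane.unitalMoment 4 (fun t => (t % 31) ^ 3) 3 (unital i) :=
        (unitalMoment_unital i).symm
    _ = spreadPlane.unitalMoment 4 (fun t => (t % 31) ^ 3) 3 (unital j) :=
        h.unitalMoment_eq (by decide) (isUnital_unital i) (isUnital_unital j) _ _
    _ = cubicMoment j := unitalMoment_unital j
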